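/- For the Steane code with the error-correcting function φ₇: for every Pauli word g on 7 qubits supported in at most one qubit, one has φ₇(ε(g)) = g, and hence φ₇(ε(g))·g = I ∈ S₇; that is, the Steane code corrects every single-qubit error with probability one. -/

import Mathlib

/-!
Any two Pauli letters commute or anticommute, and every letter squares to the identity. Both facts
pass to Kronecker products: `pauliWord_mul_comm` gives `P Q = (∏ⱼ ±1) Q P`, with one sign per qubit,
and `pauliWord_mul_self` gives `P² = 1`. Since Pauli words are therefore invertible,
two of them commute exactly when the product of signs is `1` (`pauliWord_commute_iff`). The syndrome
of a Pauli word is thus a combinatorial function of its letters. A word supported on at most one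
qubit is determined by a position and a letter, so the decoding identity `φ₇(ε(g)) = g`
reduces to a finite check over 28 pairs (`phi7Word_update`); that `φ₇(ε(g)) g = 1`
is then `P² = 1`.
-/

open Matrix Kronecker
open scoped Classical

noncomputable section

/-- The four single-qubit Pauli matrices `I, X, Y, Z` (indexed `0,1,2,3`). -/
def PauliMat : Fin 4 → Matrix (Fin 2) (Fin 2) ℂ
  | 0 => 1
  | 1 => !![0, 1; 1, 0]
  | 2 => !![0, -Complex.I; Complex.I, 0]
  | 3 => !![1, 0; 0, -1]

/-- The allowed phases `{1, -1, i, -i}`. -/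
def PauliPhase : Set ℂ := {1, -1, Complex.I, -Complex.I}

/-- The `n`-fold Kronecker product `P₁ ⊗ ⋯ ⊗ Pₙ` of single-qubit Pauli matrices
(qubit 1 leftmost). -/
def pauliWord : (n : ℕ) → (Fin n → Fin 4) → Matrix (Fin (2 ^ n)) (Fin (2 ^ n)) ℂ
  | 0, _ => 1
  | n + 1, P =>
      Matrix.reindex (finProdFinEquiv.trans (finCongr (by ring)))
        (finProdFinEquiv.trans (finCongr (by ring)))
        (Matrix.kroneckerMap (· * ·) (PauliMat (P 0)) (pauliWord n (fun j => P j.succ)))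

/-- The `n`-qubit Pauli group `Gⁿ`, as a set of `2ⁿ × 2ⁿ` complex matrices. -/
def PauliGroup (n : ℕ) : Set (Matrix (Fin (2 ^ n)) (Fin (2 ^ n)) ℂ) :=
  {A | ∃ c ∈ PauliPhase, ∃ P : Fin n → Fin 4, A = c • pauliWord n P}

/-- The syndrome of `g` with respect to generators `gs`: the `i`-th component is `0`
if `g` commutes with `gs i` and `1` otherwise (for Pauli elements, "otherwise" means
anticommutes). -/
def syndrome {n r : ℕ} (gs : Fin r → Matrix (Fin (2 ^ n)) (Fin (2 ^ n)) ℂ)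
    (g : Matrix (Fin (2 ^ n)) (Fin (2 ^ n)) ℂ) : Fin r → ZMod 2 :=
  fun i => if g * gs i = gs i * g then 0 else 1


/-- The six generators of the Steane code stabilizer:
g₁ = IIIXXXX, g₂ = IXXIIXX, g₃ = XIXIXIX, g₄ = IIIZZZZ, g₅ = IZZIIZZ, g₆ = ZIZIZIZ. -/
def steaneGens : Fin 6 → Matrix (Fin (2 ^ 7)) (Fin (2 ^ 7)) ℂ :=
  ![pauliWord 7 ![0, 0, 0, 1, 1, 1, 1], pauliWord 7 ![0, 1, 1, 0, 0, 1, 1],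
    pauliWord 7 ![1, 0, 1, 0, 1, 0, 1], pauliWord 7 ![0, 0, 0, 3, 3, 3, 3],
    pauliWord 7 ![0, 3, 3, 0, 0, 3, 3], pauliWord 7 ![3, 0, 3, 0, 3, 0, 3]]

/-- The letters (0 = I, 1 = X, 2 = Y, 3 = Z) of the Pauli word assigned by the Steane
error-correcting function to a syndrome ε: with a = 4ε₁+2ε₂+ε₃ and b = 4ε₄+2ε₅+ε₆,
qubit j gets Y if j = a = b ≠ 0, Z if j = a ≠ b, X if j = b ≠ a, and I otherwise. -/
def phi7Word (e : Fin 6 → ZMod 2) : Fin 7 → Fin 4 := fun j =>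
  let a : ℕ := 4 * (e 0).val + 2 * (e 1).val + (e 2).val
  let b : ℕ := 4 * (e 3).val + 2 * (e 4).val + (e 5).val
  if j.val + 1 = a ∧ a = b then 2
  else if j.val + 1 = a then 3
  else if j.val + 1 = b then 1
  else 0

/-- The error-correcting function of the Steane code. -/
def phi7 (e : Fin 6 → ZMod 2) : Matrix (Fin (2 ^ 7)) (Fin (2 ^ 7)) ℂ :=
  pauliWord 7 (phi7Word e)

/-- The sign `s` with `A B = s B A` for the Pauli letters `A`, `B`: it is `1` when one of them is `I`
or they are equal, and `-1` otherwise. -/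
def pauliSign (a b : Fin 4) : ℤ := if a = 0 ∨ b = 0 ∨ a = b then 1 else -1

/-- The letters of the six Steane generators. -/
def steaneLetters : Fin 6 → Fin 7 → Fin 4 :=
  ![![0, 0, 0, 1, 1, 1, 1], ![0, 1, 1, 0, 0, 1, 1],
    ![1, 0, 1, 0, 1, 0, 1], ![0, 0, 0, 3, 3, 3, 3],
    ![0, 3, 3, 0, 0, 3, 3], ![3, 0, 3, 0, 3, 0, 3]]

lemma steaneGens_eq (i : Fin 6) : steaneGens i = pauliWord 7 (steaneLetters i) := by
  fin_cases i <;> rfl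

lemma pauliMat_mul_self (a : Fin 4) : PauliMat a * PauliMat a = 1 := by
  fin_cases a <;> ext i j <;> fin_cases i <;> fin_cases j <;>
    simp [PauliMat, Matrix.mul_apply]

lemma pauliMat_mul_comm (a b : Fin 4) :
    PauliMat a * PauliMat b = (pauliSign a b : ℂ) • (PauliMat b * PauliMat a) := by
  fin_cases a <;> fin_cases b <;> ext i j <;> fin_cases i <;> fin_cases j <;>
    simp [PauliMat, pauliSign, Matrix.mul_apply]

lemma pauliWord_mul_self (n : ℕ) (P : Fin n → Fin 4) : pauliWord n P * pauliWord n P = 1 := by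
  induction n with
  | zero => simp [pauliWord]
  | succ n ih =>
    simp only [pauliWord, Matrix.reindex_apply, Matrix.submatrix_mul_equiv]
    rw [← Matrix.mul_kronecker_mul, pauliMat_mul_self, ih, Matrix.one_kronecker_one,
      Matrix.submatrix_one_equiv]

lemma pauliWord_mul_comm (n : ℕ) (P Q : Fin n → Fin 4) :
    pauliWord n P * pauliWord n Q =
      ((∏ j, pauliSign (P j) (Q j) : ℤ) : ℂ) • (pauliWord n Q * pauliWord n P) := by
  induction n with
  | zero => simp [pauliWord]
  | succ n ih =>
    simp only [pauliWord, Matrix.reindex_apply, Matrix.submatrix_mul_equiv]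
    rw [← Matrix.mul_kronecker_mul, ← Matrix.mul_kronecker_mul, pauliMat_mul_comm, ih,
      Matrix.smul_kronecker, Matrix.kronecker_smul, smul_smul, Fin.prod_univ_succ, Int.cast_mul,
      Matrix.submatrix_smul]
    rfl

lemma pauliWord_commute_iff (n : ℕ) (P Q : Fin n → Fin 4) :
    pauliWord n P * pauliWord n Q = pauliWord n Q * pauliWord n P ↔
      ∏ j, pauliSign (P j) (Q j) = 1 := by
  rw [pauliWord_mul_comm]
  constructor
  · intro h
    -- Multiplying on the right by `P Q`, the inverse of `Q P`, leaves an equation of scalars.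
    have hinv : pauliWord n Q * pauliWord n P * (pauliWord n P * pauliWord n Q) = 1 := by
      rw [mul_assoc, ← mul_assoc (pauliWord n P), pauliWord_mul_self, one_mul, pauliWord_mul_self]
    have hmul := congrArg (· * (pauliWord n P * pauliWord n Q)) h
    simp only [Matrix.smul_mul, hinv] at hmul
    have hentry := congrFun (congrFun hmul ⟨0, by positivity⟩) ⟨0, by positivity⟩
    simp only [Matrix.smul_apply, Matrix.one_apply_eq, smul_eq_mul, mul_one] at hentry
    exact_mod_cast hentry
  · intro h
    rw [h, Int.cast_one, one_smul]

lemma syndrome_pauliWord (P : Fin 7 → Fin 4) :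
    syndrome steaneGens (pauliWord 7 P) =
      fun i => if ∏ j, pauliSign (P j) (steaneLetters i j) = 1 then 0 else 1 := by
  funext i
  simp only [syndrome, steaneGens_eq, pauliWord_commute_iff]

/-- The decoding identity at the level of letters, for the word with letter `a` at qubit `j` and
`I` elsewhere. -/
lemma phi7Word_update : ∀ (j : Fin 7) (a : Fin 4),
    phi7Word (fun i => if ∏ k, pauliSign (Function.update (0 : Fin 7 → Fin 4) j a k)
      (steaneLetters i k) = 1 then 0 else 1) = Function.update (0 : Fin 7 → Fin 4) j a := by
  decide +kernel

/-- the Steane code corrects every single-qubit error with probability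
one: for every Pauli word g supported in at most one qubit, φ₇(ε(g)) = g and
φ₇(ε(g))·g = I ∈ S₇. -/
theorem steane_corrects_single_qubit_errors
    (P : Fin 7 → Fin 4) (hP : ∃ j, ∀ i, i ≠ j → P i = 0) :
    phi7 (syndrome steaneGens (pauliWord 7 P)) = pauliWord 7 P ∧
    phi7 (syndrome steaneGens (pauliWord 7 P)) * pauliWord 7 P = 1 ∧
    phi7 (syndrome steaneGens (pauliWord 7 P)) * pauliWord 7 P ∈
      Submonoid.closure (Set.range steaneGens) := by
  obtain ⟨j, hj⟩ := hP
  have hP : P = Function.update (0 : Fin 7 → Fin 4) j (P j) := by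
    funext i
    by_cases h : i = j
    · subst h; simp
    · simp [h, hj i h]
  have hword : phi7Word (syndrome steaneGens (pauliWord 7 P)) = P := by
    rw [syndrome_pauliWord, hP]
    exact phi7Word_update j (P j)
  have hphi : phi7 (syndrome steaneGens (pauliWord 7 P)) = pauliWord 7 P := by
    rw [phi7, hword]
  have hone : phi7 (syndrome steaneGens (pauliWord 7 P)) * pauliWord 7 P = 1 := by
    rw [hphi, pauliWord_mul_self]
  exact ⟨hphi, hone, hone ▸ Submonoid.one_mem _⟩

end
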